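/- Let ε ∈ [−1/2, 1/2] with ε ≠ 0. Then there exists a constant C_ε > 0, depending only on A₂, K₂ and ε, such that for every integer N ≥ 2 (h = 1/N) the spectral (ℓ²-operator) norm of the N×N quadrature-error matrix satisfies ‖E^ε‖₂ ≤ C_ε h^{3/2}. -/

import Mathlib

/-!
The spectral norm is at most the Frobenius norm, so it suffices to bound the entries. Write
`σ = |sin (π u₀)|` with `u₀ = (i - j + ε) h`, which is nonzero because `0 < |ε| ≤ 1/2`. Each entry
satisfies `‖E_ij‖ ≤ C h³ / σ` (`exists_cell_bound`): subtracting the midpoint value inside the double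
integral leaves the variation of the smooth coefficients, which is `O(h)` times at most
`|log σ²| ≤ 2 / σ`, and the variation of `log (sin² (π u))` for `|u - u₀| ≤ h`. The latter is
`O(h / σ)` up to an integrable singularity of order `|u - k| ^ (-1/2)` at the integers `k`
(`abs_log_sin_sub_le`), whose integral over a cell has the right size
(`integral_sqrtMajorant_le`).

Since `∑ⱼ σ⁻² ≤ S N²` by comparison with the convergent series `∑ₘ 1 / (m + ε)²` over the integers
(`sum_inv_sin_sq_le`), the squared Frobenius norm is at most `N · C² h⁶ · S N² = C² S h³`.
-/

noncomputable section

/-- Smooth kernel data, 1-periodic in each variable. -/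
def SPK (A : ℝ → ℝ → ℂ) : Prop :=
  ContDiff ℝ (⊤ : ℕ∞) (fun p : ℝ × ℝ => A p.1 p.2) ∧
    (∀ s t, A (s + 1) t = A s t) ∧ (∀ s t, A s (t + 1) = A s t)

/-- Logarithmic kernel `V(s,t) = (i/(2π)) A(s,t) log(sin²(π(s−t))) + K(s,t)`. -/
def logKer (A K : ℝ → ℝ → ℂ) (s t : ℝ) : ℂ :=
  Complex.I / (2 * Real.pi) * A s t * (Real.log (Real.sin (Real.pi * (s - t)) ^ 2) : ℂ) + K s t

/-- Grid point `s_{j+ε} = (j − 1/2 + ε)h`. -/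
def sg (h ε : ℝ) (j : ℤ) : ℝ := ((j : ℝ) - 1 / 2 + ε) * h

/-- Grid point `t_{j+ε} = (j + ε)h`. -/
def tg (h ε : ℝ) (j : ℤ) : ℝ := ((j : ℝ) + ε) * h

/-- Integral operator with kernel `V`. -/
def Vop (V : ℝ → ℝ → ℂ) (φ : ℝ → ℂ) (s : ℝ) : ℂ := ∫ t in (0:ℝ)..1, V s t * φ t

/-- Hypersingular operator `W = −D V₁ D + V₂`. -/
def Wop (V1 V2 : ℝ → ℝ → ℂ) (φ : ℝ → ℂ) (s : ℝ) : ℂ :=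
  -deriv (Vop V1 (deriv φ)) s + Vop V2 φ s

/-- Nyström matrix entries `W^ε_{ij}`. -/
def Wmat (V1 V2 : ℝ → ℝ → ℂ) (h ε : ℝ) (i j : ℤ) : ℂ :=
  V1 (sg h ε (i + 1)) (sg h 0 (j + 1)) - V1 (sg h ε i) (sg h 0 (j + 1))
    - V1 (sg h ε (i + 1)) (sg h 0 j) + V1 (sg h ε i) (sg h 0 j)
    + (h : ℂ) ^ 2 * V2 (tg h ε i) (tg h 0 j)

/-- Fourier coefficient of a 1-periodic function. -/
def fc (u : ℝ → ℂ) (m : ℤ) : ℂ :=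
  ∫ t in (0:ℝ)..1, u t * Complex.exp (-(2 * Real.pi * Complex.I * (m : ℂ) * (t : ℂ)))

/-- Periodic Sobolev norm of order `r`. -/
def sobNorm (r : ℝ) (u : ℝ → ℂ) : ℝ :=
  Real.sqrt (‖fc u 0‖ ^ 2 +
    ∑' m : ℤ, if m = 0 then 0 else |(m : ℝ)| ^ (2 * r) * ‖fc u m‖ ^ 2)

/-- 1-periodic step function on the ε-shifted grid with coefficients `v`. -/
def stepf (N : ℕ) (ε : ℝ) (v : ZMod N → ℂ) (s : ℝ) : ℂ :=
  v ((⌊s * N + 1 / 2 - ε⌋ : ℤ) : ZMod N)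

/-- Midpoint quadrature error matrix entries `E^ε_{ij}`. -/
def Emat (V2 : ℝ → ℝ → ℂ) (h ε : ℝ) (i j : ℤ) : ℂ :=
  (∫ s in (sg h ε i)..(sg h ε (i + 1)), ∫ t in (sg h 0 j)..(sg h 0 (j + 1)), V2 s t)
    - (h : ℂ) ^ 2 * V2 (tg h ε i) (tg h 0 j)

/-- Spectral (ℓ²-operator) norm of a complex `N×N` matrix. -/
def specNorm {N : ℕ} (M : Matrix (Fin N) (Fin N) ℂ) : ℝ :=
  ‖LinearMap.toContinuousLinearMap (Matrix.toEuclideanLin M)‖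

/-- The function `C̄₁(t) = −(1/(2πi)) log(4 sin²(πt))`. -/
def Cbar1 (t : ℝ) : ℂ :=
  -(1 / (2 * Real.pi * Complex.I)) * (Real.log (4 * Real.sin (Real.pi * t) ^ 2) : ℂ)

end

/-! ### The logarithmic singularity -/

lemma abs_sin_sub_abs_sin_le {u v h : ℝ} (hh : |u - v| ≤ h) :
    abs (|Real.sin (Real.pi * u)| - |Real.sin (Real.pi * v)|) ≤ Real.pi * h := by
  refine (abs_abs_sub_abs_le _ _).trans ?_
  have h1 : |Real.sin (Real.pi * u) - Real.sin (Real.pi * v)|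
      ≤ |Real.pi * u - Real.pi * v| := by
    have := Real.lipschitzWith_sin.dist_le_mul (Real.pi * u) (Real.pi * v)
    simpa [Real.dist_eq] using this
  refine h1.trans ?_
  rw [← mul_sub, abs_mul, abs_of_pos Real.pi_pos]
  exact mul_le_mul_of_nonneg_left hh Real.pi_pos.le

/-- On `[-3/2, 3/2]` some integer among `0, 1, -1` is nearest to `u`, and Jordan's inequality bounds
`|sin (π u)|` below by the distance to it. -/
lemma abs_sin_ge {u : ℝ} (hu : |u| ≤ 3 / 2) :
    |u| ≤ |Real.sin (Real.pi * u)| ∨ |u - 1| ≤ |Real.sin (Real.pi * u)| ∨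
      |u + 1| ≤ |Real.sin (Real.pi * u)| := by
  have key : ∀ x : ℝ, |x| ≤ 1 / 2 → |x| ≤ |Real.sin (Real.pi * x)| := by
    intro x hx
    have hpi := Real.pi_pos
    have h1 : |Real.pi * x| ≤ Real.pi / 2 := by
      rw [abs_mul, abs_of_pos hpi]; nlinarith
    have h2 := Real.mul_abs_le_abs_sin h1
    rw [abs_mul, abs_of_pos hpi] at h2
    have h3 : 2 / Real.pi * (Real.pi * |x|) = 2 * |x| := by field_simp
    have := abs_nonneg x
    linarith
  rw [abs_le] at hu
  by_cases h1 : 1 / 2 < u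
  · right; left
    have := key (u - 1) (by rw [abs_le]; constructor <;> linarith)
    rwa [mul_sub, mul_one, Real.sin_sub_pi, abs_neg] at this
  by_cases h2 : u < -(1 / 2)
  · right; right
    have := key (u + 1) (by rw [abs_le]; constructor <;> linarith)
    rwa [mul_add, mul_one, Real.sin_add_pi, abs_neg] at this
  · left
    exact key u (by rw [abs_le]; constructor <;> linarith)

/-- An integrable singular majorant of `|sin (π u)| ^ (-1/2)` on `[-3/2, 3/2]`: the sum of the
inverse square roots of the distances to `0`, `1` and `-1`. -/
noncomputable def sqrtMajorant (u : ℝ) : ℝ :=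
  |u| ^ (-(1 / 2) : ℝ) + |u - 1| ^ (-(1 / 2) : ℝ) + |u + 1| ^ (-(1 / 2) : ℝ)

lemma sqrtMajorant_nonneg (u : ℝ) : 0 ≤ sqrtMajorant u := by
  unfold sqrtMajorant; positivity

lemma rpow_abs_sin_le {u : ℝ} (hu : |u| ≤ 3 / 2) (h0 : u ≠ 0) (h1 : u ≠ 1) (h2 : u ≠ -1) :
    |Real.sin (Real.pi * u)| ^ (-(1 / 2) : ℝ) ≤ sqrtMajorant u := by
  have mono : ∀ x : ℝ, x ≠ 0 → |x| ≤ |Real.sin (Real.pi * u)| →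
      |Real.sin (Real.pi * u)| ^ (-(1 / 2) : ℝ) ≤ |x| ^ (-(1 / 2) : ℝ) := fun x hx hle =>
    Real.rpow_le_rpow_of_nonpos (abs_pos.mpr hx) hle (by norm_num)
  have p0 : 0 ≤ |u| ^ (-(1 / 2) : ℝ) := by positivity
  have p1 : 0 ≤ |u - 1| ^ (-(1 / 2) : ℝ) := by positivity
  have p2 : 0 ≤ |u + 1| ^ (-(1 / 2) : ℝ) := by positivity
  unfold sqrtMajorant
  rcases abs_sin_ge hu with h | h | h
  · linarith [mono _ h0 h]
  · linarith [mono _ (sub_ne_zero.mpr h1) h]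
  · linarith [mono (u + 1) (fun h => h2 (by linarith)) h]

/-- Variation of `log (sin² (π u))` over a distance `h`. With `σ₀ = |sin (π u₀)|`, either
`σ₀ ≥ 2πh`, and the logarithm is Lipschitz with constant of order `1/σ₀` between the two points, or
`1 ≤ 2πh/σ₀`, and `log x ≤ 2 √x` controls the singularity. -/
lemma abs_log_sin_sub_le {u u₀ h : ℝ} (hh : 0 < h) (hd : |u - u₀| ≤ h)
    (hu : 0 < |Real.sin (Real.pi * u)|) (hu₀ : 0 < |Real.sin (Real.pi * u₀)|) :
    |Real.log (Real.sin (Real.pi * u) ^ 2) - Real.log (Real.sin (Real.pi * u₀) ^ 2)| ≤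
      h / |Real.sin (Real.pi * u₀)| *
        (16 + 96 * h ^ (1 / 2 : ℝ) * |Real.sin (Real.pi * u)| ^ (-(1 / 2) : ℝ)) := by
  have hab := abs_sin_sub_abs_sin_le hd
  have hpi := Real.pi_pos
  have hpi4 := Real.pi_le_four
  rw [← sq_abs (Real.sin (Real.pi * u)), ← sq_abs (Real.sin (Real.pi * u₀)), Real.log_pow,
    Real.log_pow]
  set a := |Real.sin (Real.pi * u)|
  set b := |Real.sin (Real.pi * u₀)|
  rw [abs_le] at hab
  have hX : 0 ≤ 96 * h ^ (1 / 2 : ℝ) * a ^ (-(1 / 2) : ℝ) := by positivity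
  have hhb : 0 < h / b := by positivity
  have hup : Real.log a - Real.log b ≤ 4 * (h / b) := by
    rw [← Real.log_div hu.ne' hu₀.ne']
    have := Real.log_le_sub_one_of_pos (div_pos hu hu₀)
    have h2 : a / b - 1 ≤ 4 * (h / b) := by
      rw [← mul_div_assoc, div_sub_one hu₀.ne']
      gcongr
      nlinarith [hab.2]
    linarith
  have hlow : Real.log b - Real.log a ≤
      h / b * (8 + 48 * h ^ (1 / 2 : ℝ) * a ^ (-(1 / 2) : ℝ)) := by
    by_cases hfar : 2 * Real.pi * h ≤ b
    · rw [← Real.log_div hu₀.ne' hu.ne']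
      have := Real.log_le_sub_one_of_pos (div_pos hu₀ hu)
      have h2 : b / a - 1 ≤ 8 * (h / b) := by
        rw [← mul_div_assoc, div_sub_one hu.ne', div_le_div_iff₀ hu hu₀]
        have ha2 : b / 2 ≤ a := by linarith [hab.1]
        have : b - a ≤ 4 * h := by nlinarith [hab.1]
        nlinarith
      nlinarith
    · push Not at hfar
      have h1 : Real.log (b / a) ≤ 2 * (b / a) ^ (1 / 2 : ℝ) := by
        have := Real.log_le_rpow_div (div_pos hu₀ hu).le (show (0:ℝ) < 1 / 2 by norm_num)
        linarith
      rw [← Real.log_div hu₀.ne' hu.ne']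
      have h2 : (b / a) ^ (1 / 2 : ℝ) ≤ 3 * h ^ (1 / 2 : ℝ) * a ^ (-(1 / 2) : ℝ) := by
        rw [Real.div_rpow hu₀.le hu.le, Real.rpow_neg hu.le, div_eq_mul_inv]
        gcongr
        have : b ≤ 9 * h := by nlinarith
        calc b ^ (1 / 2 : ℝ) ≤ (9 * h) ^ (1 / 2 : ℝ) := by gcongr
          _ = 3 * h ^ (1 / 2 : ℝ) := by
            rw [Real.mul_rpow (by norm_num) hh.le]
            congr 1
            rw [← Real.sqrt_eq_rpow, show (9:ℝ) = 3 ^ 2 by norm_num, Real.sqrt_sq (by norm_num)]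
      have h3 : 1 ≤ 8 * (h / b) := by
        rw [← mul_div_assoc, le_div_iff₀ hu₀]; nlinarith
      have hY : 0 ≤ h ^ (1 / 2 : ℝ) * a ^ (-(1 / 2) : ℝ) := by positivity
      nlinarith
  rw [abs_le]
  push_cast
  constructor <;> nlinarith

lemma abs_log_sin_sq_le {u : ℝ} (hu : 0 < |Real.sin (Real.pi * u)|) :
    |Real.log (Real.sin (Real.pi * u) ^ 2)| ≤ 2 / |Real.sin (Real.pi * u)| := by
  rw [← sq_abs (Real.sin (Real.pi * u)), Real.log_pow]
  have h1 := Real.abs_sin_le_one (Real.pi * u)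
  set a := |Real.sin (Real.pi * u)|
  have h2 := Real.log_nonpos hu.le h1
  have h3 := Real.one_sub_inv_le_log_of_pos hu
  rw [abs_le, div_eq_mul_inv]
  have h4 : 0 < a⁻¹ := by positivity
  push_cast
  constructor <;> nlinarith

/-! ### Integrating the singular majorant -/

lemma intervalIntegrable_abs_rpow (a b : ℝ) :
    IntervalIntegrable (fun x : ℝ => |x| ^ (-(1 / 2) : ℝ)) MeasureTheory.volume a b := by
  have hpos : ∀ c : ℝ, 0 ≤ c →
      IntervalIntegrable (fun x : ℝ => |x| ^ (-(1 / 2) : ℝ)) MeasureTheory.volume 0 c := by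
    intro c hc
    refine (intervalIntegral.intervalIntegrable_rpow' (by norm_num)).congr
      (f := fun x : ℝ => x ^ (-(1 / 2) : ℝ)) ?_
    intro x hx
    rw [Set.uIoc_of_le hc] at hx
    simp only [abs_of_pos hx.1]
  have hall : ∀ c : ℝ,
      IntervalIntegrable (fun x : ℝ => |x| ^ (-(1 / 2) : ℝ)) MeasureTheory.volume 0 c := by
    intro c
    rcases le_total 0 c with hc | hc
    · exact hpos c hc
    · have := (IntervalIntegrable.iff_comp_neg (f := fun x : ℝ => |x| ^ (-(1 / 2) : ℝ))
        (a := 0) (b := -c) (by simp)).mp (hpos (-c) (by linarith))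
      simpa using this
  exact (hall a).symm.trans (hall b)

/-- `|x| ^ (-1/2) ≤ h ^ (-1/2)` away from `[-h, h]`, and the integral over `[-h, h]` is `4 √h`. -/
lemma integral_abs_rpow_le {a h : ℝ} (hh : 0 < h) :
    ∫ x in a..(a + h), |x| ^ (-(1 / 2) : ℝ) ≤ 5 * h ^ (1 / 2 : ℝ) := by
  set g : ℝ → ℝ := fun x => |x| ^ (-(1 / 2) : ℝ)
  have hgi : ∀ a b, IntervalIntegrable g MeasureTheory.volume a b := intervalIntegrable_abs_rpow
  have hg0 : ∀ x, 0 ≤ g x := fun x => by positivity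
  have hIcc : MeasureTheory.Integrable ((Set.Ioc (-h) h).indicator g) := by
    rw [MeasureTheory.integrable_indicator_iff measurableSet_Ioc]
    exact (intervalIntegrable_iff_integrableOn_Ioc_of_le (by linarith)).mp (hgi _ _)
  have hhalf : ∫ x in (0:ℝ)..h, g x = 2 * h ^ (1 / 2 : ℝ) := by
    have : ∫ x in (0:ℝ)..h, g x = ∫ x in (0:ℝ)..h, x ^ (-(1 / 2) : ℝ) := by
      refine intervalIntegral.integral_congr fun x hx => ?_
      rw [Set.uIcc_of_le hh.le] at hx
      simp only [g, abs_of_nonneg hx.1]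
    rw [this, integral_rpow (Or.inl (by norm_num))]
    rw [show (-(1 / 2) + 1 : ℝ) = 1 / 2 by norm_num, Real.zero_rpow (by norm_num)]
    ring
  have hneg : ∫ x in (-h)..(0:ℝ), g x = 2 * h ^ (1 / 2 : ℝ) := by
    rw [← hhalf]
    have := intervalIntegral.integral_comp_neg (a := -h) (b := 0) g
    simp only [neg_neg, neg_zero] at this
    rw [← this]
    refine intervalIntegral.integral_congr fun x _ => ?_
    simp [g]
  have hfull : ∫ x, (Set.Ioc (-h) h).indicator g x = 4 * h ^ (1 / 2 : ℝ) := by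
    rw [MeasureTheory.integral_indicator measurableSet_Ioc,
      ← intervalIntegral.integral_of_le (by linarith),
      ← intervalIntegral.integral_add_adjacent_intervals (hgi (-h) 0) (hgi 0 h), hneg, hhalf]
    ring
  have hle : ∀ x, g x ≤ h ^ (-(1 / 2) : ℝ) + (Set.Ioc (-h) h).indicator g x := by
    intro x
    have hp : 0 ≤ h ^ (-(1 / 2) : ℝ) := by positivity
    by_cases hx : x ∈ Set.Ioc (-h) h
    · rw [Set.indicator_of_mem hx]; linarith
    · rw [Set.indicator_of_notMem hx, add_zero]
      refine Real.rpow_le_rpow_of_nonpos hh ?_ (by norm_num)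
      by_contra hc
      push Not at hc
      rw [abs_lt] at hc
      exact hx ⟨hc.1, hc.2.le⟩
  calc ∫ x in a..(a + h), g x
      ≤ ∫ x in a..(a + h), (h ^ (-(1 / 2) : ℝ) + (Set.Ioc (-h) h).indicator g x) :=
        intervalIntegral.integral_mono (by linarith) (hgi _ _)
          (intervalIntegrable_const.add hIcc.intervalIntegrable) hle
    _ = h * h ^ (-(1 / 2) : ℝ) + ∫ x in a..(a + h), (Set.Ioc (-h) h).indicator g x := by
        rw [intervalIntegral.integral_add intervalIntegrable_const hIcc.intervalIntegrable]
        simp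
    _ ≤ h * h ^ (-(1 / 2) : ℝ) + 4 * h ^ (1 / 2 : ℝ) := by
        gcongr
        rw [← hfull, intervalIntegral.integral_of_le (by linarith)]
        exact MeasureTheory.setIntegral_le_integral hIcc
          (Filter.Eventually.of_forall fun x => Set.indicator_nonneg (fun x _ => hg0 x) x)
    _ = 5 * h ^ (1 / 2 : ℝ) := by
        have : h * h ^ (-(1 / 2) : ℝ) = h ^ (1 / 2 : ℝ) := by
          nth_rewrite 1 [← Real.rpow_one h]
          rw [← Real.rpow_add hh]; norm_num
        rw [this]; ring

lemma intervalIntegrable_sqrtMajorant (s a b : ℝ) :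
    IntervalIntegrable (fun t => sqrtMajorant (s - t)) MeasureTheory.volume a b := by
  have key : ∀ c : ℝ, IntervalIntegrable (fun t : ℝ => |c - t| ^ (-(1 / 2) : ℝ))
      MeasureTheory.volume a b := by
    intro c
    have := (intervalIntegrable_abs_rpow (c - a) (c - b)).comp_sub_left c
    simpa using this
  unfold sqrtMajorant
  refine ((key s).add ?_).add ?_
  · refine (key (s - 1)).congr fun t _ => ?_
    congr 2; ring
  · refine (key (s + 1)).congr fun t _ => ?_
    congr 2; ring

lemma integral_sqrtMajorant_le (s a : ℝ) {h : ℝ} (hh : 0 < h) :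
    ∫ t in a..(a + h), sqrtMajorant (s - t) ≤ 15 * h ^ (1 / 2 : ℝ) := by
  have keyi : ∀ c : ℝ, IntervalIntegrable (fun t : ℝ => |s - t + c| ^ (-(1 / 2) : ℝ))
      MeasureTheory.volume a (a + h) := by
    intro c
    have := (intervalIntegrable_abs_rpow (s + c - a) (s + c - (a + h))).comp_sub_left (s + c)
    simp only [sub_sub_cancel] at this
    refine this.congr fun t _ => ?_
    congr 2; ring
  have key : ∀ c : ℝ, ∫ t in a..(a + h), |s - t + c| ^ (-(1 / 2) : ℝ) ≤ 5 * h ^ (1 / 2 : ℝ) := by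
    intro c
    have h1 := intervalIntegral.integral_comp_sub_left (a := a) (b := a + h)
      (fun x : ℝ => |x| ^ (-(1 / 2) : ℝ)) (s + c)
    have h2 := integral_abs_rpow_le (a := s + c - (a + h)) hh
    rw [show s + c - (a + h) + h = s + c - a by ring, ← h1] at h2
    refine le_trans (le_of_eq ?_) h2
    refine intervalIntegral.integral_congr fun t _ => ?_
    congr 2; ring
  have hcongr : ∫ t in a..(a + h), sqrtMajorant (s - t) = ∫ t in a..(a + h),
      (|s - t + 0| ^ (-(1 / 2) : ℝ) + |s - t + -1| ^ (-(1 / 2) : ℝ)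
        + |s - t + 1| ^ (-(1 / 2) : ℝ)) := by
    refine intervalIntegral.integral_congr fun t _ => ?_
    simp [sqrtMajorant, sub_eq_add_neg]
  rw [hcongr, intervalIntegral.integral_add ((keyi 0).add (keyi (-1))) (keyi 1),
    intervalIntegral.integral_add (keyi 0) (keyi (-1))]
  linarith [key 0, key (-1), key 1]

/-! ### Quadrature error on one cell -/

lemma measurable_logKer {A K : ℝ → ℝ → ℂ} (hA : SPK A) (hK : SPK K) :
    Measurable (fun p : ℝ × ℝ => logKer A K p.1 p.2) := by
  unfold logKer
  have h1 : Measurable (fun p : ℝ × ℝ => A p.1 p.2) := hA.1.continuous.measurable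
  have h2 : Measurable (fun p : ℝ × ℝ => K p.1 p.2) := hK.1.continuous.measurable
  have h3 : Measurable (fun p : ℝ × ℝ =>
      (Real.log (Real.sin (Real.pi * (p.1 - p.2)) ^ 2) : ℂ)) := by
    fun_prop
  exact ((measurable_const.mul h1).mul h3).add h2

/-- Bounds for a kernel coefficient on the square `[-1, 1]²`, which contains all cells. -/
lemma SPK.exists_bounds {A : ℝ → ℝ → ℂ} (hA : SPK A) :
    ∃ M ≥ (0:ℝ), (∀ s t, |s| ≤ 1 → |t| ≤ 1 → ‖A s t‖ ≤ M) ∧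
      ∀ s t s' t' h, |s| ≤ 1 → |t| ≤ 1 → |s'| ≤ 1 → |t'| ≤ 1 → |s - s'| ≤ h → |t - t'| ≤ h →
        ‖A s t - A s' t'‖ ≤ M * h := by
  set S : Set (ℝ × ℝ) := Metric.closedBall 0 1
  have hS : ∀ s t : ℝ, |s| ≤ 1 → |t| ≤ 1 → (s, t) ∈ S := by
    intro s t hs ht
    simp [S, Prod.norm_def, hs, ht]
  have hcomp : IsCompact S := isCompact_closedBall _ _
  obtain ⟨B, hB⟩ := hcomp.exists_bound_of_continuousOn hA.1.continuous.continuousOn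
  obtain ⟨L, hL⟩ := hA.1.contDiffOn.exists_lipschitzOnWith (s := S) (by simp)
    (convex_closedBall _ _) hcomp
  refine ⟨max B L, le_max_of_le_right L.2, fun s t hs ht => ?_, ?_⟩
  · exact (hB _ (hS s t hs ht)).trans (le_max_left _ _)
  · intro s t s' t' h hs ht hs' ht' h1 h2
    have := hL.dist_le_mul _ (hS s t hs ht) _ (hS s' t' hs' ht')
    rw [dist_eq_norm] at this
    refine this.trans ?_
    gcongr
    · exact le_max_right _ _
    · rw [Prod.dist_eq]
      exact max_le h1 h2

/-- The quadrature error on a cell of side `h` with midpoint `(s₀, t₀)` is at most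
`C h³ / |sin (π (s₀ - t₀))|`. -/
lemma exists_cell_bound {A K : ℝ → ℝ → ℂ} (hA : SPK A) (hK : SPK K) :
    ∃ C > (0:ℝ), ∀ h s₀ t₀ : ℝ, 0 < h → h ≤ 1 / 2 → |s₀| + h / 2 ≤ 1 → |t₀| + h / 2 ≤ 1 →
      |s₀ - t₀| ≤ 1 → 0 < |Real.sin (Real.pi * (s₀ - t₀))| →
      ‖(∫ s in (s₀ - h / 2)..(s₀ - h / 2 + h), ∫ t in (t₀ - h / 2)..(t₀ - h / 2 + h),
          logKer A K s t) - (h : ℂ) ^ 2 * logKer A K s₀ t₀‖ ≤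
        C * h ^ 3 / |Real.sin (Real.pi * (s₀ - t₀))| := by
  obtain ⟨M, hM0, hMA, hLA⟩ := hA.exists_bounds
  obtain ⟨M', hM0', -, hLK⟩ := hK.exists_bounds
  refine ⟨1458 * M + M' + 1, by positivity, ?_⟩
  intro h s₀ t₀ hh hh2 hs₀ ht₀ hst hσ
  set σ := |Real.sin (Real.pi * (s₀ - t₀))| with hσdef
  have hσ1 : σ ≤ 1 := Real.abs_sin_le_one _
  have hhσ : 0 < h / σ := div_pos hh hσ
  have hhle : h ≤ h / σ := by
    rw [le_div_iff₀ hσ]; nlinarith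
  set a := t₀ - h / 2 with ha
  have hmeas := measurable_logKer hA hK
  set bound : ℝ → ℝ → ℝ := fun s t =>
    h / σ * (18 * M + M') + h / σ * (96 * M * h ^ (1 / 2 : ℝ)) * sqrtMajorant (s - t) with hbound
  -- the pointwise bound, off the three lines where the logarithm is singular
  have hpt : ∀ s ∈ Set.Icc (s₀ - h / 2) (s₀ - h / 2 + h), ∀ t ∈ Set.Icc a (a + h),
      t ≠ s → t ≠ s - 1 → t ≠ s + 1 →
      ‖logKer A K s t - logKer A K s₀ t₀‖ ≤ bound s t := by
    intro s hs t ht n0 n1 n2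
    have hs1 : |s - s₀| ≤ h / 2 := by
      rw [abs_le]; constructor <;> linarith [hs.1, hs.2]
    have ht1 : |t - t₀| ≤ h / 2 := by
      rw [abs_le]; constructor <;> linarith [ht.1, ht.2]
    have hs0' : |s₀| ≤ 1 := by linarith
    have ht0' : |t₀| ≤ 1 := by linarith
    have hs' : |s| ≤ 1 := by
      have := abs_add_le (s - s₀) s₀
      rw [sub_add_cancel] at this; linarith
    have ht' : |t| ≤ 1 := by
      have := abs_add_le (t - t₀) t₀
      rw [sub_add_cancel] at this; linarith
    have hd : |(s - t) - (s₀ - t₀)| ≤ h := by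
      have := abs_sub (s - s₀) (t - t₀)
      rw [show (s - t) - (s₀ - t₀) = (s - s₀) - (t - t₀) by ring]; linarith
    have hu : |s - t| ≤ 3 / 2 := by
      have := abs_add_le ((s - t) - (s₀ - t₀)) (s₀ - t₀)
      rw [sub_add_cancel] at this; linarith
    have hsin : 0 < |Real.sin (Real.pi * (s - t))| := by
      rcases abs_sin_ge hu with hl | hl | hl
      · exact lt_of_lt_of_le (abs_pos.mpr (sub_ne_zero.mpr n0.symm)) hl
      · exact lt_of_lt_of_le (abs_pos.mpr fun h => n1 (by linarith)) hl
      · exact lt_of_lt_of_le (abs_pos.mpr fun h => n2 (by linarith)) hl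
    have hlog := abs_log_sin_sub_le hh hd hsin hσ
    have hmaj := rpow_abs_sin_le hu (sub_ne_zero.mpr n0.symm)
      (fun h => n1 (by linarith)) (fun h => n2 (by linarith))
    have hlog0 := abs_log_sin_sq_le hσ
    rw [← hσdef] at hlog hlog0
    have hA1 := hMA s t hs' ht'
    have hA2 := hLA s t s₀ t₀ h hs' ht' hs0' ht0' (by linarith) (by linarith)
    have hK2 := hLK s t s₀ t₀ h hs' ht' hs0' ht0' (by linarith) (by linarith)
    have hc : ‖Complex.I / (2 * Real.pi)‖ ≤ 1 := by
      have := Real.pi_gt_three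
      rw [norm_div, Complex.norm_I, norm_mul, Complex.norm_ofNat, Complex.norm_real,
        Real.norm_of_nonneg (by linarith),
        div_le_one (by linarith)]
      linarith
    have hsplit : logKer A K s t - logKer A K s₀ t₀ =
        Complex.I / (2 * Real.pi) * (A s t *
          ((Real.log (Real.sin (Real.pi * (s - t)) ^ 2)
            - Real.log (Real.sin (Real.pi * (s₀ - t₀)) ^ 2) : ℝ) : ℂ)
          + (A s t - A s₀ t₀) * (Real.log (Real.sin (Real.pi * (s₀ - t₀)) ^ 2) : ℝ))
        + (K s t - K s₀ t₀) := by
      unfold logKer; push_cast; ring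
    set ℓ := Real.log (Real.sin (Real.pi * (s - t)) ^ 2)
    set ℓ₀ := Real.log (Real.sin (Real.pi * (s₀ - t₀)) ^ 2)
    have hS : |ℓ - ℓ₀| ≤ h / σ * (16 + 96 * h ^ (1 / 2 : ℝ) * sqrtMajorant (s - t)) :=
      hlog.trans (by gcongr)
    calc ‖logKer A K s t - logKer A K s₀ t₀‖
        ≤ 1 * (‖A s t‖ * |ℓ - ℓ₀| + ‖A s t - A s₀ t₀‖ * |ℓ₀|) + ‖K s t - K s₀ t₀‖ := by
          rw [hsplit]
          refine (norm_add_le _ _).trans ?_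
          gcongr
          rw [norm_mul]
          gcongr
          refine (norm_add_le _ _).trans ?_
          rw [norm_mul, norm_mul, Complex.norm_real, Complex.norm_real, Real.norm_eq_abs,
            Real.norm_eq_abs]
      _ ≤ 1 * (M * (h / σ * (16 + 96 * h ^ (1 / 2 : ℝ) * sqrtMajorant (s - t)))
            + M * h * (2 / σ)) + M' * (h / σ) := by
          have := hK2.trans (mul_le_mul_of_nonneg_left hhle hM0')
          gcongr
      _ = bound s t := by
          simp only [hbound]; ring
  have hbi : ∀ s, IntervalIntegrable (bound s) MeasureTheory.volume a (a + h) := fun s =>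
    intervalIntegrable_const.add ((intervalIntegrable_sqrtMajorant s a (a + h)).const_mul _)
  have hae : ∀ s ∈ Set.Icc (s₀ - h / 2) (s₀ - h / 2 + h), ∀ᵐ t, t ∈ Set.Ioc a (a + h) →
      ‖logKer A K s t - logKer A K s₀ t₀‖ ≤ bound s t := by
    intro s hs
    have hfin : ({s, s - 1, s + 1} : Set ℝ).Countable := (Set.toFinite _).countable
    filter_upwards [hfin.ae_notMem MeasureTheory.volume] with t htn ht
    simp only [Set.mem_insert_iff, Set.mem_singleton_iff, not_or] at htn
    exact hpt s hs t ⟨ht.1.le, ht.2⟩ htn.1 htn.2.1 htn.2.2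
  have hdi : ∀ s ∈ Set.Icc (s₀ - h / 2) (s₀ - h / 2 + h),
      IntervalIntegrable (fun t => logKer A K s t - logKer A K s₀ t₀)
        MeasureTheory.volume a (a + h) := by
    intro s hs
    refine (hbi s).mono_fun' ?_ ?_
    · exact ((hmeas.comp measurable_prodMk_left).sub_const _).aestronglyMeasurable
    · rw [Set.uIoc_of_le (by linarith)]
      exact (MeasureTheory.ae_restrict_iff' measurableSet_Ioc).mpr (hae s hs)
  have hvi : ∀ s ∈ Set.Icc (s₀ - h / 2) (s₀ - h / 2 + h),
      IntervalIntegrable (fun t => logKer A K s t) MeasureTheory.volume a (a + h) := by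
    intro s hs
    simpa using (hdi s hs).add (intervalIntegrable_const (c := logKer A K s₀ t₀))
  set B := (1458 * M + M' + 1) * h ^ 2 / σ with hB
  have hinner : ∀ s ∈ Set.Icc (s₀ - h / 2) (s₀ - h / 2 + h),
      ‖(∫ t in a..(a + h), logKer A K s t) - h * logKer A K s₀ t₀‖ ≤ B := by
    intro s hs
    have e1 : (∫ t in a..(a + h), logKer A K s t) - h * logKer A K s₀ t₀ =
        ∫ t in a..(a + h), (logKer A K s t - logKer A K s₀ t₀) := by
      rw [intervalIntegral.integral_sub (hvi s hs) intervalIntegrable_const]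
      simp
    rw [e1]
    refine (intervalIntegral.norm_integral_le_of_norm_le (by linarith) (hae s hs) (hbi s)).trans ?_
    simp only [hbound]
    rw [intervalIntegral.integral_add intervalIntegrable_const
      ((intervalIntegrable_sqrtMajorant s a (a + h)).const_mul _),
      intervalIntegral.integral_const_mul (h / σ * (96 * M * h ^ (1 / 2 : ℝ))),
      intervalIntegral.integral_const]
    have h1 := integral_sqrtMajorant_le s a hh
    have h2 : h ^ (1 / 2 : ℝ) * h ^ (1 / 2 : ℝ) = h := by
      rw [← Real.rpow_add hh]; norm_num
    calc (a + h - a) • (h / σ * (18 * M + M'))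
          + h / σ * (96 * M * h ^ (1 / 2 : ℝ)) * ∫ t in a..(a + h), sqrtMajorant (s - t)
        ≤ h * (h / σ * (18 * M + M'))
          + h / σ * (96 * M * h ^ (1 / 2 : ℝ)) * (15 * h ^ (1 / 2 : ℝ)) := by
          rw [smul_eq_mul, add_sub_cancel_left]
          gcongr
      _ = h * (h / σ * (18 * M + M'))
          + h / σ * (1440 * M) * (h ^ (1 / 2 : ℝ) * h ^ (1 / 2 : ℝ)) := by ring
      _ = (1458 * M + M') * h ^ 2 / σ := by rw [h2]; ring
      _ ≤ B := by
          rw [hB]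
          refine div_le_div_of_nonneg_right ?_ hσ.le
          nlinarith [sq_nonneg h]
  -- the outer integrand is measurable and bounded, hence integrable
  have houter : IntervalIntegrable (fun s => ∫ t in a..(a + h), logKer A K s t)
      MeasureTheory.volume (s₀ - h / 2) (s₀ - h / 2 + h) := by
    have hm : MeasureTheory.StronglyMeasurable (fun s => ∫ t in a..(a + h), logKer A K s t) := by
      simp only [intervalIntegral.integral_of_le (show a ≤ a + h by linarith)]
      exact MeasureTheory.StronglyMeasurable.integral_prod_right
        (f := fun s t => logKer A K s t) hmeas.stronglyMeasurable
    refine (intervalIntegrable_const (c := B + ‖(h : ℂ) * logKer A K s₀ t₀‖)).mono_fun'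
      hm.aestronglyMeasurable ?_
    rw [Set.uIoc_of_le (by linarith)]
    refine (MeasureTheory.ae_restrict_iff' measurableSet_Ioc).mpr
      (Filter.Eventually.of_forall fun s hs => ?_)
    have h1 := hinner s ⟨hs.1.le, hs.2⟩
    have h2 := norm_add_le ((∫ t in a..(a + h), logKer A K s t) - h * logKer A K s₀ t₀)
      ((h : ℂ) * logKer A K s₀ t₀)
    rw [sub_add_cancel] at h2
    linarith
  have e2 : (∫ s in (s₀ - h / 2)..(s₀ - h / 2 + h), ∫ t in a..(a + h), logKer A K s t)
      - (h : ℂ) ^ 2 * logKer A K s₀ t₀ = ∫ s in (s₀ - h / 2)..(s₀ - h / 2 + h),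
        ((∫ t in a..(a + h), logKer A K s t) - h * logKer A K s₀ t₀) := by
    rw [intervalIntegral.integral_sub houter intervalIntegrable_const,
      intervalIntegral.integral_const, add_sub_cancel_left, Complex.real_smul]
    ring
  rw [e2]
  refine (intervalIntegral.norm_integral_le_of_norm_le_const (C := B) fun s hs => ?_).trans
    (le_of_eq ?_)
  · rw [Set.uIoc_of_le (by linarith)] at hs
    exact hinner s ⟨hs.1.le, hs.2⟩
  · rw [add_sub_cancel_left, abs_of_pos hh, hB]; ring

/-! ### From entries to the spectral norm -/

/-- The spectral norm is at most the Frobenius norm. -/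
lemma specNorm_le_of_sum_sq {N : ℕ} (M : Matrix (Fin N) (Fin N) ℂ) {B : ℝ} (hB : 0 ≤ B)
    (h : ∑ i, ∑ j, ‖M i j‖ ^ 2 ≤ B ^ 2) : specNorm M ≤ B := by
  unfold specNorm
  refine ContinuousLinearMap.opNorm_le_bound _ hB fun x => ?_
  refine abs_le_of_sq_le_sq' ?_ (by positivity) |>.2
  rw [mul_pow, EuclideanSpace.norm_sq_eq, EuclideanSpace.norm_sq_eq]
  calc ∑ i, ‖(LinearMap.toContinuousLinearMap (Matrix.toEuclideanLin M) x) i‖ ^ 2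
      ≤ ∑ i, (∑ j, ‖M i j‖ ^ 2) * ∑ j, ‖x j‖ ^ 2 := by
        refine Finset.sum_le_sum fun i _ => ?_
        have h1 : ‖(LinearMap.toContinuousLinearMap (Matrix.toEuclideanLin M) x) i‖ ≤
            ∑ j, ‖M i j‖ * ‖x j‖ := by
          simp only [LinearMap.coe_toContinuousLinearMap', Matrix.toLpLin_apply,
            Matrix.mulVec, dotProduct]
          refine (norm_sum_le _ _).trans (le_of_eq ?_)
          simp
        refine (pow_le_pow_left₀ (norm_nonneg _) h1 2).trans ?_
        exact Finset.sum_mul_sq_le_sq_mul_sq _ _ _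
    _ = (∑ i, ∑ j, ‖M i j‖ ^ 2) * ∑ j, ‖x j‖ ^ 2 := by rw [Finset.sum_mul]
    _ ≤ B ^ 2 * ∑ j, ‖x j‖ ^ 2 := by gcongr

/-- `∑ⱼ 1 / sin² (π (i - j + ε) / N) = O(N²)`: each term is dominated by one of three terms
`N² / (m + ε)²`, with `m` among `i - j`, `i - j - N`, `i - j + N`. -/
lemma sum_inv_sin_sq_le {ε : ℝ} (hε1 : |ε| ≤ 1 / 2) (hε0 : ε ≠ 0) :
    ∃ S > (0:ℝ), ∀ N : ℕ, 2 ≤ N → ∀ i : Fin N,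
      (∀ j : Fin N, 0 < |Real.sin (Real.pi * ((((i : ℕ) : ℝ) + ε) / N - ((j : ℕ) : ℝ) / N))|) ∧
      ∑ j : Fin N, (|Real.sin (Real.pi * ((((i : ℕ) : ℝ) + ε) / N - ((j : ℕ) : ℝ) / N))| ^ 2)⁻¹
        ≤ S * (N : ℝ) ^ 2 := by
  have hne : ∀ m : ℤ, (m : ℝ) + ε ≠ 0 := by
    intro m hm
    have h1 : |(m : ℝ)| ≤ 1 / 2 := by
      rw [show (m : ℝ) = -ε by linarith, abs_neg]; exact hε1
    have h2 : m = 0 := by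
      by_contra hm0
      have : (1 : ℝ) ≤ |(m : ℝ)| := by exact_mod_cast Int.one_le_abs hm0
      linarith
    subst h2
    exact hε0 (by simpa using hm)
  set f : ℤ → ℝ := fun m => 1 / |(m : ℝ) + ε| ^ (2 : ℝ) with hf
  have hsum : Summable f := Real.summable_one_div_int_add_rpow ε 2 |>.mpr (by norm_num)
  have hf0 : ∀ m, 0 ≤ f m := fun m => by positivity
  have hT : 0 ≤ ∑' m, f m := tsum_nonneg hf0
  refine ⟨3 * (∑' m, f m) + 1, by linarith, ?_⟩
  intro N hN i
  have hN0 : (0 : ℝ) < N := by positivity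
  set σ : Fin N → ℝ := fun j =>
    |Real.sin (Real.pi * ((((i : ℕ) : ℝ) + ε) / N - ((j : ℕ) : ℝ) / N))| with hσ
  -- the three shifted indices, and the comparison at one of them
  have hcase : ∀ j : Fin N, ∃ c ∈ ({0, -1, 1} : Finset ℤ),
      |(((i : ℤ) - (j : ℤ) + c * N : ℤ) : ℝ) + ε| / N ≤ σ j := by
    intro j
    have hi : ((i : ℕ) : ℝ) + 1 ≤ N := by exact_mod_cast i.2
    have hj : ((j : ℕ) : ℝ) + 1 ≤ N := by exact_mod_cast j.2
    have hi0 : (0 : ℝ) ≤ ((i : ℕ) : ℝ) := by positivity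
    have hj0 : (0 : ℝ) ≤ ((j : ℕ) : ℝ) := by positivity
    rw [abs_le] at hε1
    have hu : |(((i : ℕ) : ℝ) + ε) / N - ((j : ℕ) : ℝ) / N| ≤ 3 / 2 := by
      rw [← sub_div, abs_div, abs_of_pos hN0, div_le_iff₀ hN0, abs_le]
      constructor <;> linarith [hε1.1, hε1.2]
    have conv : ∀ c : ℤ, |(((i : ℤ) - (j : ℤ) + c * N : ℤ) : ℝ) + ε| / N =
        |(((i : ℕ) : ℝ) + ε) / N - ((j : ℕ) : ℝ) / N + c| := by
      intro c
      rw [← abs_of_pos hN0, ← abs_div, abs_of_pos hN0]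
      congr 1
      push_cast
      field_simp
      ring
    rcases abs_sin_ge hu with h | h | h
    · exact ⟨0, by simp, by rw [conv]; simpa using h⟩
    · exact ⟨-1, by simp, by rw [conv]; simpa [← sub_eq_add_neg] using h⟩
    · exact ⟨1, by simp, by rw [conv]; simpa using h⟩
  have hpos : ∀ j, 0 < σ j := by
    intro j
    obtain ⟨c, -, hc⟩ := hcase j
    exact lt_of_lt_of_le (div_pos (abs_pos.mpr (hne _)) hN0) hc
  refine ⟨hpos, ?_⟩
  have hterm : ∀ j, (σ j ^ 2)⁻¹ ≤
      ∑ c ∈ ({0, -1, 1} : Finset ℤ), (N : ℝ) ^ 2 * f ((i : ℤ) - (j : ℤ) + c * N) := by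
    intro j
    obtain ⟨c, hcm, hc⟩ := hcase j
    refine le_trans ?_ (Finset.single_le_sum
      (f := fun c : ℤ => (N : ℝ) ^ 2 * f ((i : ℤ) - (j : ℤ) + c * N))
      (fun c _ => mul_nonneg (by positivity) (hf0 _)) hcm)
    simp only [hf]
    have hp := abs_pos.mpr (hne ((i : ℤ) - (j : ℤ) + c * N))
    rw [Real.rpow_two, ← div_eq_mul_one_div, ← inv_div, ← div_pow]
    gcongr
  calc ∑ j, (σ j ^ 2)⁻¹
      ≤ ∑ j : Fin N, ∑ c ∈ ({0, -1, 1} : Finset ℤ),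
          (N : ℝ) ^ 2 * f ((i : ℤ) - (j : ℤ) + c * N) := Finset.sum_le_sum fun j _ => hterm j
    _ = ∑ c ∈ ({0, -1, 1} : Finset ℤ), (N : ℝ) ^ 2 *
          ∑ j : Fin N, f ((i : ℤ) - (j : ℤ) + c * N) := by
        rw [Finset.sum_comm]
        simp only [Finset.mul_sum]
    _ ≤ ∑ c ∈ ({0, -1, 1} : Finset ℤ), (N : ℝ) ^ 2 * ∑' m, f m := by
        gcongr with c _
        have hinj : Function.Injective (fun j : Fin N => (i : ℤ) - (j : ℤ) + c * N) := by
          intro j k hjk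
          simp only at hjk
          exact Fin.ext (by omega)
        have := hsum.sum_le_tsum (Finset.univ.map ⟨_, hinj⟩) (fun m _ => hf0 m)
        simpa using this
    _ ≤ (3 * (∑' m, f m) + 1) * (N : ℝ) ^ 2 := by
        rw [Finset.sum_const]
        simp only [nsmul_eq_mul]
        have : (({0, -1, 1} : Finset ℤ).card : ℝ) = 3 := by norm_num
        rw [this]
        nlinarith [sq_nonneg (N : ℝ)]

/-- spectral-norm bound `‖E^ε‖₂ ≤ C_ε h^{3/2}` for the quadrature-error matrix. -/
theorem stmt_5
    (A2 K2 : ℝ → ℝ → ℂ) (hA2 : SPK A2) (hK2 : SPK K2)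
    (ε : ℝ) (hε1 : ε ∈ Set.Icc (-(1:ℝ)/2) (1/2)) (hε0 : ε ≠ 0) :
    ∃ C > (0:ℝ), ∀ N : ℕ, 2 ≤ N →
      specNorm (Matrix.of fun i j : Fin N =>
          Emat (logKer A2 K2) (1 / (N : ℝ)) ε ((i : ℕ) : ℤ) ((j : ℕ) : ℤ)) ≤
        C * (1 / (N : ℝ)) ^ ((3:ℝ)/2) := by
  have hε : |ε| ≤ 1 / 2 := by
    rw [abs_le]; constructor <;> linarith [hε1.1, hε1.2]
  obtain ⟨C, hC, hcell⟩ := exists_cell_bound hA2 hK2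
  obtain ⟨S, hS, hsum⟩ := sum_inv_sin_sq_le hε hε0
  refine ⟨C * Real.sqrt S, by positivity, fun N hN => ?_⟩
  have hN0 : (0 : ℝ) < N := by positivity
  have hN2 : (2 : ℝ) ≤ N := by exact_mod_cast hN
  refine specNorm_le_of_sum_sq _ (by positivity) ?_
  set σ : Fin N → Fin N → ℝ := fun i j =>
    |Real.sin (Real.pi * ((((i : ℕ) : ℝ) + ε) / N - ((j : ℕ) : ℝ) / N))| with hσ
  have hentry : ∀ i j : Fin N,
      ‖Emat (logKer A2 K2) (1 / (N : ℝ)) ε ((i : ℕ) : ℤ) ((j : ℕ) : ℤ)‖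
        ≤ C * (1 / (N : ℝ)) ^ 3 / σ i j := by
    intro i j
    have hi : ((i : ℕ) : ℝ) + 1 ≤ N := by exact_mod_cast i.2
    have hj : ((j : ℕ) : ℝ) + 1 ≤ N := by exact_mod_cast j.2
    have hi0 : (0 : ℝ) ≤ ((i : ℕ) : ℝ) := by positivity
    have hj0 : (0 : ℝ) ≤ ((j : ℕ) : ℝ) := by positivity
    have hε' := abs_le.mp hε
    have hab : ∀ x : ℝ, |x| ≤ N - 1 / 2 → |x / N| + 1 / (N : ℝ) / 2 ≤ 1 := by
      intro x hx
      rw [abs_div, abs_of_pos hN0, div_div, mul_comm (N : ℝ) 2, ← div_div, ← add_div,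
        div_le_one hN0]
      linarith
    have := hcell (1 / N) ((((i : ℕ) : ℝ) + ε) / N) (((j : ℕ) : ℝ) / N) (by positivity)
      (by gcongr) (hab _ (by rw [abs_le]; constructor <;> linarith [hε'.1, hε'.2]))
      (hab _ (by rw [abs_le]; constructor <;> linarith))
      (by
        rw [← sub_div, abs_div, abs_of_pos hN0, div_le_one hN0, abs_le]
        constructor <;> linarith [hε'.1, hε'.2])
      ((hsum N hN i).1 j)
    have e1 : sg (1 / (N : ℝ)) ε ((i : ℕ) : ℤ) = (((i : ℕ) : ℝ) + ε) / N - 1 / N / 2 := by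
      unfold sg; push_cast; ring
    have e2 : sg (1 / (N : ℝ)) ε (((i : ℕ) : ℤ) + 1) =
        (((i : ℕ) : ℝ) + ε) / N - 1 / N / 2 + 1 / N := by
      unfold sg; push_cast; ring
    have e3 : sg (1 / (N : ℝ)) 0 ((j : ℕ) : ℤ) = ((j : ℕ) : ℝ) / N - 1 / N / 2 := by
      unfold sg; push_cast; ring
    have e4 : sg (1 / (N : ℝ)) 0 (((j : ℕ) : ℤ) + 1) =
        ((j : ℕ) : ℝ) / N - 1 / N / 2 + 1 / N := by
      unfold sg; push_cast; ring
    have e5 : tg (1 / (N : ℝ)) ε ((i : ℕ) : ℤ) = (((i : ℕ) : ℝ) + ε) / N := by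
      unfold tg; push_cast; ring
    have e6 : tg (1 / (N : ℝ)) 0 ((j : ℕ) : ℤ) = ((j : ℕ) : ℝ) / N := by
      unfold tg; push_cast; ring
    unfold Emat
    rw [e1, e2, e3, e4, e5, e6]
    exact this
  calc ∑ i : Fin N, ∑ j : Fin N, ‖Matrix.of (fun i j : Fin N =>
          Emat (logKer A2 K2) (1 / (N : ℝ)) ε ((i : ℕ) : ℤ) ((j : ℕ) : ℤ)) i j‖ ^ 2
      ≤ ∑ i : Fin N, ∑ j : Fin N, (C * (1 / (N : ℝ)) ^ 3) ^ 2 * (σ i j ^ 2)⁻¹ := by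
        refine Finset.sum_le_sum fun i _ => Finset.sum_le_sum fun j _ => ?_
        rw [← div_eq_mul_inv, ← div_pow]
        exact pow_le_pow_left₀ (norm_nonneg _) (hentry i j) 2
    _ ≤ ∑ _i : Fin N, (C * (1 / (N : ℝ)) ^ 3) ^ 2 * (S * (N : ℝ) ^ 2) := by
        refine Finset.sum_le_sum fun i _ => ?_
        rw [← Finset.mul_sum]
        exact mul_le_mul_of_nonneg_left (hsum N hN i).2 (by positivity)
    _ = (C * Real.sqrt S * (1 / (N : ℝ)) ^ ((3:ℝ)/2)) ^ 2 := by
        have h32 : ((1 / (N : ℝ)) ^ ((3:ℝ)/2)) ^ 2 = (1 / (N : ℝ)) ^ 3 := by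
          rw [← Real.rpow_natCast, ← Real.rpow_mul (by positivity), ← Real.rpow_natCast]
          norm_num
        rw [mul_pow (C * Real.sqrt S), mul_pow C (Real.sqrt S), Real.sq_sqrt hS.le, h32,
          Finset.sum_const, Finset.card_univ,
          Fintype.card_fin, nsmul_eq_mul]
        field_simp
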